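/- Let (𝓑₁, 𝓑₀) be a Rota-Baxter operator on a crossed module of groups (H, G, t, Φ). On G × H define: (i) the multiplication (a, p) ·_{Φ̂} (b, q) = (a ·_{𝓑₀} b, p ·_{𝓑₁} Φ̂(a)(q)), where a ·_{𝓑₀} b = a·𝓑₀(a)·b·𝓑₀(a)⁻¹, p ·_{𝓑₁} q = p·𝓑₁(p)·q·𝓑₁(p)⁻¹, and Φ̂(a)(q) = Φ(a·𝓑₀(a))(q·𝓑₁(q)) · (Φ(𝓑₀(a))(𝓑₁(q)))⁻¹; (ii) the multiplication (a, p) ·_𝓑 (b, q) = (a, p) ·_Φ 𝓑(a, p) ·_Φ (b, q) ·_Φ 𝓑(a, p)⁻¹, where (a, p) ·_Φ (b, q) = (a·b, p·Φ(a)(q)) and 𝓑(a, p) = (𝓑₀(a), Φ(𝓑₀(a))(𝓑₁(Φ(𝓑₀(a)⁻¹·a⁻¹)(p)))). Then the map φ(a, p) = (a, p·𝓑₁(p)·Φ(a)(𝓑₁(p))⁻¹) is a bijection of G × H and satisfies φ((a, p) ·_{Φ̂} (b, q)) = φ(a, p) ·_𝓑 φ(b, q) for all (a, p), (b, q) ∈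 G × H, i.e. φ is a group isomorphism from (G ⋉_{Φ̂} H, ·_{Φ̂}) to (G × H, ·_𝓑). -/

import Mathlib

/-- A crossed module of groups. -/
structure IsCrossedModule {H G : Type*} [Group H] [Group G]
    (t : H → G) (Φ : G → H → H) : Prop where
  t_mul : ∀ p q : H, t (p * q) = t p * t q
  Φ_mul_hom : ∀ (a : G) (p q : H), Φ a (p * q) = Φ a p * Φ a q
  Φ_bij : ∀ a : G, Function.Bijective (Φ a)
  Φ_one : ∀ p : H, Φ 1 p = p
  Φ_mul : ∀ (a b : G) (p : H), Φ (a * b) p = Φ a (Φ b p)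
  peiffer : ∀ p q : H, Φ (t p) q = p * q * p⁻¹
  equivar : ∀ (a : G) (p : H), t (Φ a p) = a * t p * a⁻¹

/-- Rota-Baxter operator on a group. -/
def IsRotaBaxter {G : Type*} [Group G] (B : G → G) : Prop :=
  ∀ a b : G, B a * B b = B (a * B a * b * (B a)⁻¹)

/-- Rota-Baxter operator on a crossed module of groups. -/
structure IsCMRotaBaxter {H G : Type*} [Group H] [Group G]
    (t : H → G) (Φ : G → H → H) (B₁ : H → H) (B₀ : G → G) : Prop where
  rb₁ : IsRotaBaxter B₁
  rb₀ : IsRotaBaxter B₀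
  t_comm : ∀ p : H, t (B₁ p) = B₀ (t p)
  compat : ∀ (a : G) (p : H),
    Φ (B₀ a) (B₁ p) = B₁ (Φ (a * B₀ a) (p * B₁ p) * (Φ (B₀ a) (B₁ p))⁻¹)

/-- The semidirect product multiplication `(a,p)·_Φ(b,q) = (a·b, p·Φ(a)q)` on `G × H`. -/
def sdpMul {H G : Type*} [Group H] [Group G] (Φ : G → H → H) (m n : G × H) : G × H :=
  (m.1 * n.1, m.2 * Φ m.1 n.2)

/-- The inverse for `sdpMul`. -/
def sdpInv {H G : Type*} [Group H] [Group G] (Φ : G → H → H) (m : G × H) : G × H :=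
  (m.1⁻¹, Φ m.1⁻¹ m.2⁻¹)

/-- The operator `𝓑(a,p) = (B₀(a), Φ(B₀(a))(B₁(Φ(B₀(a)⁻¹·a⁻¹)(p))))` on `G ⋉_Φ H`. -/
def Bcal {H G : Type*} [Group H] [Group G] (Φ : G → H → H)
    (B₁ : H → H) (B₀ : G → G) (m : G × H) : G × H :=
  (B₀ m.1, Φ (B₀ m.1) (B₁ (Φ ((B₀ m.1)⁻¹ * m.1⁻¹) m.2)))

/-- The descended multiplication `p ·_B q = p · B(p) · q · B(p)⁻¹`. -/
def mulB {X : Type*} [Group X] (B : X → X) (p q : X) : X := p * B p * q * (B p)⁻¹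

/-- The descended action `Φ̂(a)(p)`. -/
def hatPhi {H G : Type*} [Group H] [Group G] (Φ : G → H → H)
    (B₁ : H → H) (B₀ : G → G) (a : G) (p : H) : H :=
  Φ (a * B₀ a) (p * B₁ p) * (Φ (B₀ a) (B₁ p))⁻¹

/-- The semidirect product multiplication `·_{Φ̂}` of the descended groups. -/
def sdpMulHat {H G : Type*} [Group H] [Group G] (Φ : G → H → H)
    (B₁ : H → H) (B₀ : G → G) (m n : G × H) : G × H :=
  (mulB B₀ m.1 n.1, mulB B₁ m.2 (hatPhi Φ B₁ B₀ m.1 n.2))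

/-- The multiplication `·_𝓑` descended from the Rota-Baxter operator `𝓑` on `G ⋉_Φ H`. -/
def mulBcal {H G : Type*} [Group H] [Group G] (Φ : G → H → H)
    (B₁ : H → H) (B₀ : G → G) (m n : G × H) : G × H :=
  sdpMul Φ (sdpMul Φ (sdpMul Φ m (Bcal Φ B₁ B₀ m)) n) (sdpInv Φ (Bcal Φ B₁ B₀ m))

/-! For a Rota-Baxter operator `B` put `B₊(x) = x·B(x)`. Both `B` and `B₊` turn the descended
product into the original one, and `x` is recovered as `B₊(x)·B(x)⁻¹`. By the compatibility
condition `(B₀, B₁)` and `(B₀₊, B₁₊)` also intertwine `Φ̂` with `Φ`, so both are multiplicative from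
`G ⋉_Φ̂ H` to `G ⋉_Φ H`. The map `φ` is `m ↦ (B₀₊, B₁₊)(m) · (B₀, B₁)(m)⁻¹`, and since
`𝓑(φ(m)) = (B₀, B₁)(m)`,
`φ(m) ·_𝓑 φ(n) = (B₀₊, B₁₊)(m) · φ(n) · (B₀, B₁)(m)⁻¹ = φ(m ·_Φ̂ n)`. -/

/-- The companion `B₊(a) = a·B(a)` of a Rota-Baxter operator `B`, the second homomorphism out of the
descended group. -/
def companion {G : Type*} [Group G] (B : G → G) (a : G) : G := a * B a

theorem companion_mul_inv {G : Type*} [Group G] (B : G → G) (a : G) :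
    companion B a * (B a)⁻¹ = a :=
  mul_inv_cancel_right a (B a)

/-- The inverse `a† = B(a)⁻¹·a⁻¹·B(a)` of `a` for the descended multiplication `mulB B`. -/
def invB {G : Type*} [Group G] (B : G → G) (a : G) : G := (B a)⁻¹ * a⁻¹ * B a

namespace IsRotaBaxter

variable {G : Type*} [Group G] {B : G → G}

theorem map_one (h : IsRotaBaxter B) : B 1 = 1 := by
  simpa using h 1 1

theorem map_mulB (h : IsRotaBaxter B) (a b : G) : B (mulB B a b) = B a * B b :=
  (h a b).symm

theorem companion_mulB (h : IsRotaBaxter B) (a b : G) :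
    companion B (mulB B a b) = companion B a * companion B b := by
  rw [companion, h.map_mulB, mulB, companion, companion]
  group

theorem map_invB (h : IsRotaBaxter B) (a : G) : B (invB B a) = (B a)⁻¹ := by
  refine eq_inv_of_mul_eq_one_right ?_
  have mulB_invB : mulB B a (invB B a) = 1 := by
    rw [mulB, invB]
    group
  rw [← h.map_mulB, mulB_invB, h.map_one]

theorem companion_invB (h : IsRotaBaxter B) (a : G) :
    companion B (invB B a) = (companion B a)⁻¹ := by
  rw [companion, h.map_invB, invB, mul_inv_cancel_right, companion, mul_inv_rev]

end IsRotaBaxter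

/-- A Rota-Baxter operator on a group `H` with an action `Φ` of a group `G` by automorphisms: the
part of a Rota-Baxter operator on a crossed module that does not involve the map `t`. -/
structure IsActionRotaBaxter {H G : Type*} [Group H] [Group G] (Φ : G →* MulAut H)
    (B₁ : H → H) (B₀ : G → G) : Prop where
  rb₁ : IsRotaBaxter B₁
  rb₀ : IsRotaBaxter B₀
  map_hatPhi : ∀ (a : G) (p : H), B₁ (hatPhi (Φ ·) B₁ B₀ a p) = Φ (B₀ a) (B₁ p)

/-- The map `φ(a, p) = (a, p·B₁(p)·Φ(a)(B₁(p))⁻¹)` from `G ⋉_Φ̂ H` to `G × H` with the product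
descended from `𝓑`. -/
def twist {H G : Type*} [Group H] [Group G] (Φ : G → H → H) (B₁ : H → H) (m : G × H) : G × H :=
  (m.1, m.2 * B₁ m.2 * (Φ m.1 (B₁ m.2))⁻¹)

/-- The bijection identifying `G × H` under `sdpMul Φ` with Mathlib's `H ⋊[Φ] G`, in which the two
factors come in the opposite order. -/
def toSemidirectProduct {H G : Type*} [Group H] [Group G] (Φ : G →* MulAut H) :
    G × H ≃ H ⋊[Φ] G :=
  (Equiv.prodComm G H).trans SemidirectProduct.equivProd.symm

section Semidirect

variable {H G : Type*} [Group H] [Group G] (Φ : G →* MulAut H)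

theorem toSemidirectProduct_sdpMul (m n : G × H) :
    toSemidirectProduct Φ (sdpMul (Φ ·) m n) =
      toSemidirectProduct Φ m * toSemidirectProduct Φ n :=
  rfl

theorem toSemidirectProduct_sdpInv (m : G × H) :
    toSemidirectProduct Φ (sdpInv (Φ ·) m) = (toSemidirectProduct Φ m)⁻¹ :=
  rfl

theorem toSemidirectProduct_mulBcal (B₁ : H → H) (B₀ : G → G) (m n : G × H) :
    toSemidirectProduct Φ (mulBcal (Φ ·) B₁ B₀ m n) =
      toSemidirectProduct Φ m * toSemidirectProduct Φ (Bcal (Φ ·) B₁ B₀ m) *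
        toSemidirectProduct Φ n * (toSemidirectProduct Φ (Bcal (Φ ·) B₁ B₀ m))⁻¹ := by
  simp only [mulBcal, toSemidirectProduct_sdpMul, toSemidirectProduct_sdpInv]

theorem toSemidirectProduct_twist (B₁ : H → H) (B₀ : G → G) (m : G × H) :
    toSemidirectProduct Φ (twist (Φ ·) B₁ m) =
      toSemidirectProduct Φ (Prod.map (companion B₀) (companion B₁) m) *
        (toSemidirectProduct Φ (Prod.map B₀ B₁ m))⁻¹ := by
  rw [← toSemidirectProduct_sdpInv, ← toSemidirectProduct_sdpMul]
  simp [twist, sdpMul, sdpInv, companion]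

end Semidirect

namespace IsActionRotaBaxter

variable {H G : Type*} [Group H] [Group G] {Φ : G →* MulAut H} {B₁ : H → H} {B₀ : G → G}

theorem companion_hatPhi (h : IsActionRotaBaxter Φ B₁ B₀) (a : G) (p : H) :
    companion B₁ (hatPhi (Φ ·) B₁ B₀ a p) = Φ (companion B₀ a) (companion B₁ p) := by
  rw [companion, h.map_hatPhi, hatPhi, inv_mul_cancel_right, companion, companion]

theorem map_sdpMulHat (h : IsActionRotaBaxter Φ B₁ B₀) (m n : G × H) :
    Prod.map B₀ B₁ (sdpMulHat (Φ ·) B₁ B₀ m n) =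
      sdpMul (Φ ·) (Prod.map B₀ B₁ m) (Prod.map B₀ B₁ n) := by
  simp only [sdpMulHat, sdpMul, Prod.map, h.rb₀.map_mulB, h.rb₁.map_mulB, h.map_hatPhi]

theorem companion_sdpMulHat (h : IsActionRotaBaxter Φ B₁ B₀) (m n : G × H) :
    Prod.map (companion B₀) (companion B₁) (sdpMulHat (Φ ·) B₁ B₀ m n) =
      sdpMul (Φ ·) (Prod.map (companion B₀) (companion B₁) m)
        (Prod.map (companion B₀) (companion B₁) n) := by
  simp only [sdpMulHat, sdpMul, Prod.map, h.rb₀.companion_mulB, h.rb₁.companion_mulB,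
    h.companion_hatPhi]

theorem hatPhi_hatPhi_invB (h : IsActionRotaBaxter Φ B₁ B₀) (a : G) (p : H) :
    hatPhi (Φ ·) B₁ B₀ a (hatPhi (Φ ·) B₁ B₀ (invB B₀ a) p) = p := by
  set q := hatPhi (Φ ·) B₁ B₀ (invB B₀ a) p with hq
  have map_q : B₁ q = (Φ (B₀ a))⁻¹ (B₁ p) := by
    rw [hq, h.map_hatPhi, h.rb₀.map_invB, map_inv]
  have companion_q : companion B₁ q = (Φ (companion B₀ a))⁻¹ (companion B₁ p) := by
    rw [hq, h.companion_hatPhi, h.rb₀.companion_invB, map_inv]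
  calc hatPhi (Φ ·) B₁ B₀ a q
      = Φ (companion B₀ a) (companion B₁ q) * (Φ (B₀ a) (B₁ q))⁻¹ := rfl
    _ = companion B₁ p * (B₁ p)⁻¹ := by
      rw [map_q, companion_q, MulAut.apply_inv_self, MulAut.apply_inv_self]
    _ = p := companion_mul_inv B₁ p

theorem hatPhi_surjective (h : IsActionRotaBaxter Φ B₁ B₀) (a : G) :
    Function.Surjective (hatPhi (Φ ·) B₁ B₀ a) :=
  fun p ↦ ⟨_, h.hatPhi_hatPhi_invB a p⟩

theorem twist_hatPhi (h : IsActionRotaBaxter Φ B₁ B₀) (a : G) (p : H) :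
    twist (Φ ·) B₁ (a, hatPhi (Φ ·) B₁ B₀ a p) = (a, Φ (companion B₀ a) p) := by
  refine Prod.ext rfl ?_
  calc companion B₁ (hatPhi (Φ ·) B₁ B₀ a p) * (Φ a (B₁ (hatPhi (Φ ·) B₁ B₀ a p)))⁻¹
      = Φ (companion B₀ a) (companion B₁ p) * (Φ (companion B₀ a) (B₁ p))⁻¹ := by
        rw [h.companion_hatPhi, h.map_hatPhi, ← MulAut.mul_apply, ← map_mul]
        rfl
    _ = Φ (companion B₀ a) p := by
        rw [← map_inv, ← map_mul, companion_mul_inv]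

theorem Bcal_twist (h : IsActionRotaBaxter Φ B₁ B₀) (m : G × H) :
    Bcal (Φ ·) B₁ B₀ (twist (Φ ·) B₁ m) = Prod.map B₀ B₁ m := by
  obtain ⟨a, p⟩ := m
  obtain ⟨q, rfl⟩ := h.hatPhi_surjective a p
  rw [h.twist_hatPhi, Prod.map, h.map_hatPhi, Bcal, ← mul_inv_rev, map_inv, companion,
    MulAut.inv_apply_self]

theorem twist_bijective (h : IsActionRotaBaxter Φ B₁ B₀) :
    Function.Bijective (twist (Φ ·) B₁ : G × H → G × H) := by
  let hatShear : G × H → G × H := fun m ↦ (m.1, hatPhi (Φ ·) B₁ B₀ m.1 m.2)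
  have hatShear_surjective : Function.Surjective hatShear := by
    rintro ⟨a, p⟩
    obtain ⟨q, rfl⟩ := h.hatPhi_surjective a p
    exact ⟨(a, q), rfl⟩
  have twist_comp_hatShear : twist (Φ ·) B₁ ∘ hatShear =
      Equiv.prodShear (Equiv.refl G) fun a ↦ (Φ (companion B₀ a)).toEquiv :=
    funext fun m ↦ h.twist_hatPhi m.1 m.2
  have comp_bijective : Function.Bijective (twist (Φ ·) B₁ ∘ hatShear) :=
    twist_comp_hatShear ▸ Equiv.bijective _
  exact ⟨comp_bijective.injective.of_comp_right hatShear_surjective,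
    comp_bijective.surjective.of_comp⟩

theorem twist_sdpMulHat (h : IsActionRotaBaxter Φ B₁ B₀) (m n : G × H) :
    twist (Φ ·) B₁ (sdpMulHat (Φ ·) B₁ B₀ m n) =
      mulBcal (Φ ·) B₁ B₀ (twist (Φ ·) B₁ m) (twist (Φ ·) B₁ n) := by
  apply (toSemidirectProduct Φ).injective
  rw [toSemidirectProduct_mulBcal, h.Bcal_twist]
  simp only [toSemidirectProduct_twist Φ B₁ B₀, h.companion_sdpMulHat, h.map_sdpMulHat,
    toSemidirectProduct_sdpMul]
  group

end IsActionRotaBaxter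

/-- The action of a crossed module as a homomorphism `G →* MulAut H`, the form in which Mathlib's
semidirect product takes it. -/
def IsCrossedModule.toMulAut {H G : Type*} [Group H] [Group G] {t : H → G} {Φ : G → H → H}
    (h : IsCrossedModule t Φ) : G →* MulAut H where
  toFun a :=
    { toFun := Φ a
      invFun := Φ a⁻¹
      left_inv := fun p ↦ by rw [← h.Φ_mul, inv_mul_cancel, h.Φ_one]
      right_inv := fun p ↦ by rw [← h.Φ_mul, mul_inv_cancel, h.Φ_one]
      map_mul' := h.Φ_mul_hom a }
  map_one' := MulEquiv.ext h.Φ_one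
  map_mul' a b := MulEquiv.ext (h.Φ_mul a b)

theorem IsCMRotaBaxter.isActionRotaBaxter {H G : Type*} [Group H] [Group G] {t : H → G}
    {Φ : G → H → H} {B₁ : H → H} {B₀ : G → G} (hrb : IsCMRotaBaxter t Φ B₁ B₀)
    (hcm : IsCrossedModule t Φ) : IsActionRotaBaxter hcm.toMulAut B₁ B₀ where
  rb₁ := hrb.rb₁
  rb₀ := hrb.rb₀
  map_hatPhi a p := (hrb.compat a p).symm

theorem stmt6_general {H G : Type*} [Group H] [Group G] {Φ : G →* MulAut H}
    {B₁ : H → H} {B₀ : G → G} (h : IsActionRotaBaxter Φ B₁ B₀) :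
    Function.Bijective (twist (Φ ·) B₁ : G × H → G × H) ∧
      ∀ m n : G × H, twist (Φ ·) B₁ (sdpMulHat (Φ ·) B₁ B₀ m n) =
        mulBcal (Φ ·) B₁ B₀ (twist (Φ ·) B₁ m) (twist (Φ ·) B₁ n) :=
  ⟨h.twist_bijective, h.twist_sdpMulHat⟩

theorem stmt6 {H G : Type*} [Group H] [Group G] (t : H → G) (Φ : G → H → H)
    (B₁ : H → H) (B₀ : G → G) (hcm : IsCrossedModule t Φ)
    (hrb : IsCMRotaBaxter t Φ B₁ B₀) :
    Function.Bijective
      (fun m : G × H => (m.1, m.2 * B₁ m.2 * (Φ m.1 (B₁ m.2))⁻¹)) ∧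
    ∀ m n : G × H,
      (fun m : G × H => (m.1, m.2 * B₁ m.2 * (Φ m.1 (B₁ m.2))⁻¹))
          (sdpMulHat Φ B₁ B₀ m n)
        = mulBcal Φ B₁ B₀
            ((fun m : G × H => (m.1, m.2 * B₁ m.2 * (Φ m.1 (B₁ m.2))⁻¹)) m)
            ((fun m : G × H => (m.1, m.2 * B₁ m.2 * (Φ m.1 (B₁ m.2))⁻¹)) n) :=
  stmt6_general (hrb.isActionRotaBaxter hcm)
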